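/- Let B be an n×n real symmetric positive definite matrix, and let s, g ∈ ℝⁿ be nonzero vectors satisfying gᵀ s = 0 and gᵀ B s = 0. Then there exists an n×n real orthogonal matrix L, which can be constructed as the product of at most three Householder matrices, such that the best Frobenius-norm approximation L_B of B in the algebra L = sd L satisfies both L_B s = B s and L_B g = α g for some α ≠ 0. -/

import Mathlib

/-!
In the algebra `sd L`, each column `u` of `L` is an eigenvector of `L_B`, with eigenvalue the
Rayleigh quotient `uᵀ B u` (`sdProjR_mulVec_col`). So it suffices to find an orthonormal family of
at most three vectors that can serve as columns of `L`, one of them being `g / ‖g‖` (whose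
eigenvalue is positive), and such that `L_B s = B s` follows from the eigenvalues on the others.

If `B s` is a multiple of `s`, the vectors `s / ‖s‖` and `g / ‖g‖` do. Otherwise let `V` be the
plane spanned by `s` and `B s`, which is orthogonal to `g`, and take an orthonormal basis `u₁, u₂`
of `V` that diagonalizes the compression of `B` to `V`, that is `u₁ᵀ B u₂ = 0`
(`exists_rotation`). On `V` the operator `L_B` is then the compression of `B`, and since `B s ∈ V`
it maps `s` to `B s`.

An orthonormal family of `k` vectors is always the image of `k` coordinate vectors under a product
of at most `k` Householder matrices: adjust one vector at a time, by a reflection that fixes those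
already in place (`exists_householder_list`).
-/

open Matrix

/-- The best Frobenius-norm approximation of `B` in `sd L`:
`L d(z_B) Lᵀ` with `(z_B)_i = (Lᵀ B L)_{ii}`. -/
noncomputable def sdProjR {n : ℕ} (L B : Matrix (Fin n) (Fin n) ℝ) :
    Matrix (Fin n) (Fin n) ℝ :=
  L * Matrix.diagonal (fun i => (Lᵀ * B * L) i i) * Lᵀ

/-- The Householder matrix `H(p) = I − (2/‖p‖²) p pᵀ`. -/
noncomputable def householder {n : ℕ} (p : Fin n → ℝ) : Matrix (Fin n) (Fin n) ℝ :=
  1 - (2 / (p ⬝ᵥ p)) • Matrix.vecMulVec p p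

lemma dotProduct_self_ne_zero_of_ne {n : ℕ} {p : Fin n → ℝ} (hp : p ≠ 0) : p ⬝ᵥ p ≠ 0 :=
  fun h => hp (dotProduct_self_eq_zero.1 h)

lemma householder_mulVec {n : ℕ} (p x : Fin n → ℝ) :
    householder p *ᵥ x = x - (2 / (p ⬝ᵥ p) * (p ⬝ᵥ x)) • p := by
  simp [householder, sub_mulVec, smul_mulVec, vecMulVec_mulVec, smul_smul]

lemma householder_mem {n : ℕ} {p : Fin n → ℝ} (hp : p ≠ 0) :
    householder p ∈ Matrix.orthogonalGroup (Fin n) ℝ := by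
  have h := dotProduct_self_ne_zero_of_ne hp
  have hT : (householder p)ᵀ = householder p := by
    simp [householder, transpose_vecMulVec]
  rw [mem_orthogonalGroup_iff, hT]
  apply Matrix.ext_of_mulVec_single
  intro i
  rw [← mulVec_mulVec, householder_mulVec, householder_mulVec, one_mulVec]
  generalize (Pi.single i 1 : Fin n → ℝ) = x
  rw [sub_sub, ← add_smul]
  simp only [dotProduct_sub, dotProduct_smul, smul_eq_mul]
  rw [sub_eq_self]
  convert zero_smul ℝ p
  field_simp
  ring

lemma orthogonal_transpose_mul {n : ℕ} {L : Matrix (Fin n) (Fin n) ℝ}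
    (hL : L ∈ Matrix.orthogonalGroup (Fin n) ℝ) : Lᵀ * L = 1 := by
  simpa [star_eq_conjTranspose] using (mem_orthogonalGroup_iff' (Fin n) ℝ).1 hL

lemma orthogonal_dotProduct {n : ℕ} {L : Matrix (Fin n) (Fin n) ℝ}
    (hL : L ∈ Matrix.orthogonalGroup (Fin n) ℝ) (x y : Fin n → ℝ) :
    (L *ᵥ x) ⬝ᵥ (L *ᵥ y) = x ⬝ᵥ y := by
  rw [dotProduct_mulVec, ← mulVec_transpose, mulVec_mulVec, orthogonal_transpose_mul hL,
    one_mulVec]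

lemma prod_householder_mem {n : ℕ} (l : List (Fin n → ℝ)) (hl : ∀ p ∈ l, p ≠ 0) :
    (l.map householder).prod ∈ Matrix.orthogonalGroup (Fin n) ℝ := by
  apply Submonoid.list_prod_mem
  intro x hx
  obtain ⟨p, hp, rfl⟩ := List.mem_map.1 hx
  exact householder_mem (hl p hp)

/-- Two orthonormal families of `k` vectors are related by a product of at most `k` Householder
matrices. -/
lemma exists_householder_list {n : ℕ} (k : ℕ) (e u : Fin k → Fin n → ℝ)
    (he : ∀ i j, e i ⬝ᵥ e j = if i = j then 1 else 0)
    (hu : ∀ i j, u i ⬝ᵥ u j = if i = j then 1 else 0) :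
    ∃ l : List (Fin n → ℝ), l.length ≤ k ∧ (∀ p ∈ l, p ≠ 0) ∧
      ∀ i, (l.map householder).prod *ᵥ e i = u i := by
  induction k with
  | zero => exact ⟨[], by simp, by simp, fun i => i.elim0⟩
  | succ k ih =>
    obtain ⟨l, hlen, hne, hl⟩ := ih (fun i => e i.succ) (fun i => u i.succ)
      (fun i j => by simp [he]) (fun i j => by simp [hu])
    have hP := prod_householder_mem l hne
    set P := (l.map householder).prod with hPdef
    set w := P *ᵥ e 0 with hw
    by_cases h : w = u 0
    · exact ⟨l, by omega, hne, fun i => Fin.cases h hl i⟩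
    have hd : w - u 0 ≠ 0 := sub_ne_zero.2 h
    have hww : w ⬝ᵥ w = 1 := by rw [hw, orthogonal_dotProduct hP, he]; simp
    have huu : u 0 ⬝ᵥ u 0 = 1 := by rw [hu]; simp
    have hdd := dotProduct_self_ne_zero_of_ne hd
    refine ⟨(w - u 0) :: l, by simpa using hlen, ?_, ?_⟩
    · intro p hp
      rcases List.mem_cons.1 hp with rfl | hp
      · exact hd
      · exact hne p hp
    intro i
    rw [List.map_cons, List.prod_cons, ← hPdef, ← mulVec_mulVec, householder_mulVec]
    refine Fin.cases ?_ (fun j => ?_) i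
    · -- as `w` and `u 0` have equal norms, `2 (w - u 0)ᵀ w = ‖w - u 0‖²`
      have h2 : (w - u 0) ⬝ᵥ (w - u 0) = 2 * ((w - u 0) ⬝ᵥ w) := by
        simp only [sub_dotProduct, dotProduct_sub, hww, huu, dotProduct_comm w (u 0)]
        ring
      rw [← hw]
      have : 2 / ((w - u 0) ⬝ᵥ (w - u 0)) * ((w - u 0) ⬝ᵥ w) = 1 := by
        rw [div_mul_eq_mul_div, ← h2, div_self hdd]
      rw [this]
      simp
    · have h3 : w ⬝ᵥ u j.succ = 0 := by
        rw [← hl j, hw, orthogonal_dotProduct hP, he]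
        simp [(Fin.succ_ne_zero j).symm]
      have h4 : u 0 ⬝ᵥ u j.succ = 0 := by
        rw [hu]
        simp [(Fin.succ_ne_zero j).symm]
      rw [hl j, sub_dotProduct w (u 0) (u j.succ), h3, h4]
      simp

lemma card_le_of_orthonormal {n k : ℕ} (u : Fin k → Fin n → ℝ)
    (hu : ∀ i j, u i ⬝ᵥ u j = if i = j then 1 else 0) : k ≤ n := by
  have h : (Matrix.of u) * (Matrix.of u)ᵀ = 1 := by
    ext i j
    simpa [Matrix.mul_apply, dotProduct, Matrix.one_apply] using hu i j
  have h1 := Matrix.rank_mul_le_left (Matrix.of u) (Matrix.of u)ᵀ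
  rw [h, Matrix.rank_one] at h1
  simpa using h1.trans (Matrix.rank_le_width _)

/-- Every column of `L` is an eigenvector of `L_B`, with eigenvalue its Rayleigh quotient. -/
lemma sdProjR_mulVec_col {n : ℕ} {L : Matrix (Fin n) (Fin n) ℝ} (B : Matrix (Fin n) (Fin n) ℝ)
    (hL : L ∈ Matrix.orthogonalGroup (Fin n) ℝ) (i : Fin n) (u : Fin n → ℝ)
    (hu : L *ᵥ Pi.single i 1 = u) :
    sdProjR L B *ᵥ u = (u ⬝ᵥ (B *ᵥ u)) • u := by
  have h1 : Lᵀ *ᵥ u = Pi.single i 1 := by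
    rw [← hu, mulVec_mulVec, orthogonal_transpose_mul hL, one_mulVec]
  have h2 : (Lᵀ * B * L) i i = u ⬝ᵥ (B *ᵥ u) := by
    have : (Lᵀ * B * L) i i = Pi.single i 1 ⬝ᵥ ((Lᵀ * B * L) *ᵥ Pi.single i 1) := by
      simp
    rw [this, ← mulVec_mulVec, hu, ← mulVec_mulVec, dotProduct_mulVec, vecMul_transpose, hu]
  have h3 : diagonal (fun i => (Lᵀ * B * L) i i) *ᵥ Pi.single i 1
      = (u ⬝ᵥ (B *ᵥ u)) • (Pi.single i 1 : Fin n → ℝ) := by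
    rw [diagonal_mulVec_single, h2]
    ext j
    by_cases hj : j = i
    · subst hj; simp
    · simp [hj]
  rw [sdProjR, ← mulVec_mulVec, ← mulVec_mulVec, h1, h3, mulVec_smul, hu]

/-- Any orthonormal family of `k` vectors consists of columns of a product of at most `k`
Householder matrices. -/
lemma exists_sd {n k : ℕ} (B : Matrix (Fin n) (Fin n) ℝ) (u : Fin k → Fin n → ℝ)
    (hu : ∀ i j, u i ⬝ᵥ u j = if i = j then 1 else 0) :
    ∃ L : Matrix (Fin n) (Fin n) ℝ,
      L ∈ Matrix.orthogonalGroup (Fin n) ℝ ∧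
      (∃ l : List (Fin n → ℝ), l.length ≤ k ∧ (∀ p ∈ l, p ≠ 0) ∧
        L = (l.map householder).prod) ∧
      ∀ i, sdProjR L B *ᵥ u i = (u i ⬝ᵥ (B *ᵥ u i)) • u i := by
  have hk := card_le_of_orthonormal u hu
  obtain ⟨l, h1, h2, h3⟩ := exists_householder_list k
    (fun i => Pi.single (Fin.castLE hk i) (1 : ℝ)) u
    (fun i j => by simp [Pi.single_apply, eq_comm]) hu
  exact ⟨_, prod_householder_mem l h2, ⟨l, h1, h2, rfl⟩,
    fun i => sdProjR_mulVec_col B (prod_householder_mem l h2) _ _ (h3 i)⟩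

/-- A rotation diagonalizing the symmetric matrix with rows `(a, b)` and `(b, d)`. -/
lemma exists_rotation (a b d : ℝ) :
    ∃ p q : ℝ, p ^ 2 + q ^ 2 = 1 ∧ b * (p ^ 2 - q ^ 2) + (d - a) * (p * q) = 0 := by
  let f : ℝ → ℝ := fun t =>
    b * (Real.cos t ^ 2 - Real.sin t ^ 2) + (d - a) * (Real.cos t * Real.sin t)
  have hf : Continuous f := by fun_prop
  have h0 : f 0 = b := by simp [f]
  have h1 : f (Real.pi / 2) = -b := by simp [f]
  -- `f` takes opposite values at the ends of the interval, hence vanishes in between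
  have hz : (0 : ℝ) ∈ Set.uIcc (f 0) (f (Real.pi / 2)) := by
    rw [h0, h1, Set.mem_uIcc]
    rcases le_total 0 b with h | h
    · right; constructor <;> linarith
    · left; constructor <;> linarith
  obtain ⟨t, -, ht⟩ := intermediate_value_uIcc hf.continuousOn hz
  exact ⟨Real.cos t, Real.sin t, Real.cos_sq_add_sin_sq t, ht⟩

/-- The normalization of a nonzero vector, with the Euclidean norm written as a coefficient. -/
lemma exists_unit {n : ℕ} {x : Fin n → ℝ} (hx : x ≠ 0) :
    ∃ (c : ℝ) (v : Fin n → ℝ), c ≠ 0 ∧ x = c • v ∧ v = c⁻¹ • x ∧ v ⬝ᵥ v = 1 := by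
  have h0 : 0 < x ⬝ᵥ x := lt_of_le_of_ne
    (Finset.sum_nonneg fun i _ => mul_self_nonneg (x i)) (dotProduct_self_ne_zero_of_ne hx).symm
  have hc : Real.sqrt (x ⬝ᵥ x) ≠ 0 := (Real.sqrt_pos.2 h0).ne'
  refine ⟨Real.sqrt (x ⬝ᵥ x), (Real.sqrt (x ⬝ᵥ x))⁻¹ • x, hc, ?_, rfl, ?_⟩
  · rw [smul_smul, mul_inv_cancel₀ hc, one_smul]
  · rw [smul_dotProduct, dotProduct_smul, smul_eq_mul, smul_eq_mul]
    field_simp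
    exact (Real.sq_sqrt h0.le).symm

lemma posDef_symm {n : ℕ} {B : Matrix (Fin n) (Fin n) ℝ} (hB : B.PosDef) (x y : Fin n → ℝ) :
    x ⬝ᵥ (B *ᵥ y) = y ⬝ᵥ (B *ᵥ x) := by
  have hT : Bᵀ = B := by simpa using hB.isHermitian.eq
  rw [dotProduct_mulVec, ← mulVec_transpose, hT, dotProduct_comm]

/-- if `B` is symmetric positive definite and `s, g` are nonzero
vectors with `gᵀ s = 0` and `gᵀ B s = 0`, there is an orthogonal matrix `L`,
a product of at most three Householder matrices, such that the best
Frobenius-norm approximation `L_B` of `B` in `sd L` satisfies `L_B s = B s` and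
`L_B g = α g` for some `α ≠ 0`. -/
theorem sd_proj_quadratic_termination_algebra {n : ℕ}
    (B : Matrix (Fin n) (Fin n) ℝ) (hB : B.PosDef)
    (s g : Fin n → ℝ) (hs : s ≠ 0) (hg : g ≠ 0)
    (hgs : g ⬝ᵥ s = 0) (hgBs : g ⬝ᵥ (B *ᵥ s) = 0) :
    ∃ L : Matrix (Fin n) (Fin n) ℝ,
      L ∈ Matrix.orthogonalGroup (Fin n) ℝ ∧
      (∃ l : List (Fin n → ℝ), l.length ≤ 3 ∧ (∀ p ∈ l, p ≠ 0) ∧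
        L = (l.map householder).prod) ∧
      sdProjR L B *ᵥ s = B *ᵥ s ∧
      (∃ α : ℝ, α ≠ 0 ∧ sdProjR L B *ᵥ g = α • g) := by
  obtain ⟨cg, v, hcg, hgv, hvg, hvv⟩ := exists_unit hg
  obtain ⟨cs, w, hcs, hsw, hws, hww⟩ := exists_unit hs
  have hvw : v ⬝ᵥ w = 0 := by simp [hvg, hws, hgs]
  have hvBw : v ⬝ᵥ (B *ᵥ w) = 0 := by simp [hvg, hws, mulVec_smul, hgBs]
  have hv0 : v ≠ 0 := by rintro rfl; simp at hvv
  have hα : v ⬝ᵥ (B *ᵥ v) ≠ 0 := by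
    simpa using (hB.dotProduct_mulVec_pos hv0).ne'
  have hwv : w ⬝ᵥ v = 0 := by rw [dotProduct_comm, hvw]
  -- it suffices to treat the unit vectors `w` and `v` in place of `s` and `g`
  suffices H : ∃ L : Matrix (Fin n) (Fin n) ℝ,
      L ∈ Matrix.orthogonalGroup (Fin n) ℝ ∧
      (∃ l : List (Fin n → ℝ), l.length ≤ 3 ∧ (∀ p ∈ l, p ≠ 0) ∧
        L = (l.map householder).prod) ∧
      sdProjR L B *ᵥ w = B *ᵥ w ∧
      sdProjR L B *ᵥ v = (v ⬝ᵥ (B *ᵥ v)) • v by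
    obtain ⟨L, h1, h2, h3, h4⟩ := H
    refine ⟨L, h1, h2, ?_, _, hα, ?_⟩
    · rw [hsw, mulVec_smul, mulVec_smul, h3]
    · rw [hgv, mulVec_smul, h4, smul_comm]
  set a := w ⬝ᵥ (B *ᵥ w) with ha
  by_cases hr : B *ᵥ w - a • w = 0
  · -- `w` is an eigenvector of `B`
    obtain ⟨L, h1, ⟨l, hl, h2⟩, h3⟩ := exists_sd B ![w, v] (by
      intro i j
      fin_cases i <;> fin_cases j <;> simp [hww, hvv, hvw, hwv])
    refine ⟨L, h1, ⟨l, by omega, h2⟩, ?_, by simpa using h3 1⟩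
    rw [sub_eq_zero.1 hr]
    simpa [← ha] using h3 0
  -- `x` completes `w` to an orthonormal basis of the span of `w` and `B w`
  obtain ⟨b, x, hb, hrx, hxr, hxx⟩ := exists_unit hr
  have hwx : w ⬝ᵥ x = 0 := by
    rw [hxr, dotProduct_smul, dotProduct_sub, dotProduct_smul, hww, ← ha]
    simp
  have hxw : x ⬝ᵥ w = 0 := by rw [dotProduct_comm, hwx]
  have hvx : v ⬝ᵥ x = 0 := by
    rw [hxr, dotProduct_smul, dotProduct_sub, dotProduct_smul, hvw, hvBw]
    simp
  have hxv : x ⬝ᵥ v = 0 := by rw [dotProduct_comm, hvx]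
  have hBw : B *ᵥ w = a • w + b • x := by rw [← hrx]; abel
  have hxBw : x ⬝ᵥ (B *ᵥ w) = b := by
    simp [hBw, hxw, hxx]
  have hwBx : w ⬝ᵥ (B *ᵥ x) = b := by rw [posDef_symm hB, hxBw]
  set d := x ⬝ᵥ (B *ᵥ x) with hd
  obtain ⟨p, q, hpq, hrot⟩ := exists_rotation a b d
  have hpq' : p * p + q * q = 1 := by rw [← hpq]; ring
  obtain ⟨L, h1, h2, h3⟩ := exists_sd B ![p • w + q • x, (-q) • w + p • x, v] (by
    intro i j
    fin_cases i <;> fin_cases j <;>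
      simp [hww, hvv, hvw, hwv, hxx, hxw, hwx, hxv, hvx] <;> linarith)
  refine ⟨L, h1, h2, ?_, by simpa using h3 2⟩
  have e1 : (p • w + q • x) ⬝ᵥ (B *ᵥ (p • w + q • x))
      = p ^ 2 * a + 2 * p * q * b + q ^ 2 * d := by
    simp only [mulVec_add, mulVec_smul, add_dotProduct, dotProduct_add, smul_dotProduct,
      dotProduct_smul, smul_eq_mul, ← ha, ← hd, hxBw, hwBx]
    ring
  have e2 : ((-q) • w + p • x) ⬝ᵥ (B *ᵥ ((-q) • w + p • x))
      = q ^ 2 * a - 2 * p * q * b + p ^ 2 * d := by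
    simp only [mulVec_add, mulVec_smul, add_dotProduct, dotProduct_add, smul_dotProduct,
      dotProduct_smul, smul_eq_mul, ← ha, ← hd, hxBw, hwBx]
    ring
  have k1 : sdProjR L B *ᵥ (p • w + q • x) = _ := h3 0
  have k2 : sdProjR L B *ᵥ ((-q) • w + p • x) = _ := h3 1
  change _ = ((p • w + q • x) ⬝ᵥ (B *ᵥ (p • w + q • x))) • (p • w + q • x) at k1
  change _ = (((-q) • w + p • x) ⬝ᵥ (B *ᵥ ((-q) • w + p • x))) • ((-q) • w + p • x) at k2
  rw [e1] at k1
  rw [e2] at k2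
  -- `w` in the rotated basis
  have hw' : w = p • (p • w + q • x) - q • ((-q) • w + p • x) := by
    have : p • (p • w + q • x) - q • ((-q) • w + p • x) = (p * p + q * q) • w := by module
    rw [this, hpq', one_smul]
  have hLw : sdProjR L B *ᵥ w = p • (sdProjR L B *ᵥ (p • w + q • x))
      - q • (sdProjR L B *ᵥ ((-q) • w + p • x)) := by
    rw [← mulVec_smul, ← mulVec_smul, ← mulVec_sub, ← hw']
  rw [hLw, k1, k2, hBw]
  have c1 : p * (p ^ 2 * a + 2 * p * q * b + q ^ 2 * d) * p
      + q * (q ^ 2 * a - 2 * p * q * b + p ^ 2 * d) * q = a := by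
    linear_combination (2 * p * q) * hrot + a * (p ^ 2 + q ^ 2 + 1) * hpq
  have c2 : p * (p ^ 2 * a + 2 * p * q * b + q ^ 2 * d) * q
      - q * (q ^ 2 * a - 2 * p * q * b + p ^ 2 * d) * p = b := by
    linear_combination -(p ^ 2 - q ^ 2) * hrot + b * (p ^ 2 + q ^ 2 + 1) * hpq
  have e3 : ∀ z₁ z₂ : ℝ, p • z₁ • (p • w + q • x) - q • z₂ • ((-q) • w + p • x)
      = (p * z₁ * p + q * z₂ * q) • w + (p * z₁ * q - q * z₂ * p) • x := by
    intro z₁ z₂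
    module
  rw [e3, c1, c2]
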